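/- Let n ≥ 4 be an even integer. Fix the symmetric (n+2)×(n+2) matrix g with entries (indices 0,…,n+1): g_{ij} = 2 if 0 ≤ i,j ≤ n and i+j = n, g_{n+1,n+1} = 2, and g_{ij} = 0 otherwise; g is invertible with inverse (g^{ij}). Let F be a ℂ-analytic function on an open neighborhood U of 0 in ℂ^{n+2} (coordinates y_0,…,y_{n+1}) such that: (a) F(0) = 0 and all first and second partial derivatives of F vanish at 0; (b) ∂_{y_0}∂_{y_a}∂_{y_b} F = g_{ab} identically on U, for all a,b; (c) for all a,b,c,d, Σ_{i,j=0}^{n+1} (∂_{y_a}∂_{y_b}∂_{y_i}F) g^{ij} (∂_{y_j}∂_{y_c}∂_{y_d}F) = Σ_{i,j=0}^{n+1} (∂_{y_a}∂_{y_c}∂_{y_i}F) g^{ij} (∂_{y_j}∂_{y_b}∂_{y_d}F) on U (WDVV); (d) the function n ∂_{y_1}F + Σ_{i=0}^{n} (1−i) y_i ∂_{y_i}F + (1 − n/2) y_{n+1} ∂_{y_{n+1}}F − (3−n) F coincides on U with a polynomial of total degree ≤ 2 (Euler condition); (e) the third partial derivatives of F at 0 are: ∂_{n+1}∂_{n+1}∂_0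 F(0) = 2, ∂_{n+1}∂_{n+1}∂_n F(0) = −4, ∂_i∂_j∂_k F(0) = 2 when 0 ≤ i,j,k ≤ n and i+j+k = n, ∂_i∂_{n−i}∂_n F(0) = 4 for 1 ≤ i ≤ n−1, ∂_i∂_j∂_k F(0) = 8 when 0 ≤ i,j,k ≤ n, i+j+k = 2n and i,j,k ≠ n, ∂_n∂_n∂_n F(0) = 8, and all other third partial derivatives at 0 vanish. Then for every m ≥ 3 and every choice of indices i_1, …, i_m ∈ {0,…,n+1} such that the number of indices equal to n+1 is odd, the iterated partial derivative (∂_{y_{i_1}}⋯∂_{y_{i_m}} F)(0) = 0. -/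

import Mathlib

open Finset

/-- The partial derivative `∂F/∂yᵢ` of a function `F` on `ℂ^{n+2}` (coordinates
`y 0, …, y (n+1)`), as a function on `ℂ^{n+2}`. -/
noncomputable def pd (n : ℕ) (i : Fin (n + 2)) (F : (Fin (n + 2) → ℂ) → ℂ) :
    (Fin (n + 2) → ℂ) → ℂ :=
  fun y => deriv (fun t => F (Function.update y i t)) (y i)

/-- The flat metric `g`: `g_{ij} = 2` if `0 ≤ i, j ≤ n` and `i + j = n`, `g_{n+1,n+1} = 2`,
and `g_{ij} = 0` otherwise. -/
noncomputable def gmat (n : ℕ) (i j : Fin (n + 2)) : ℂ :=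
  if ((i : ℕ) ≤ n ∧ (j : ℕ) ≤ n ∧ (i : ℕ) + (j : ℕ) = n) ∨
      ((i : ℕ) = n + 1 ∧ (j : ℕ) = n + 1) then 2 else 0

/-- The inverse metric `g^{ij}`: `g^{ij} = 1/2` at exactly the entries where `g_{ij} = 2`,
and `0` elsewhere; this is the inverse matrix of `gmat n`. -/
noncomputable def ginv (n : ℕ) (i j : Fin (n + 2)) : ℂ :=
  if ((i : ℕ) ≤ n ∧ (j : ℕ) ≤ n ∧ (i : ℕ) + (j : ℕ) = n) ∨
      ((i : ℕ) = n + 1 ∧ (j : ℕ) = n + 1) then 1 / 2 else 0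

open Classical in
/-- The prescribed third partial derivatives at the origin (the length-3 correlators of the
quadric `Qⁿ`): as a symmetric function of the multiset of indices `{a, b, c}`,
`{n+1, n+1, 0} ↦ 2`, `{n+1, n+1, n} ↦ −4`, `{i, j, k} ↦ 2` if `i,j,k ≤ n` and `i+j+k = n`,
`{i, n−i, n} ↦ 4` for `1 ≤ i ≤ n−1`, `{i, j, k} ↦ 8` if `i,j,k ≤ n`, `i+j+k = 2n` and
`i,j,k ≠ n`, `{n, n, n} ↦ 8`, and `0` otherwise. -/
noncomputable def corr3 (n : ℕ) (a b c : Fin (n + 2)) : ℂ :=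
  if ({(a : ℕ), (b : ℕ), (c : ℕ)} : Multiset ℕ) = {n + 1, n + 1, 0} then 2
  else if ({(a : ℕ), (b : ℕ), (c : ℕ)} : Multiset ℕ) = {n + 1, n + 1, n} then -4
  else if (a : ℕ) ≤ n ∧ (b : ℕ) ≤ n ∧ (c : ℕ) ≤ n ∧ (a : ℕ) + (b : ℕ) + (c : ℕ) = n then 2
  else if ∃ i : ℕ, 1 ≤ i ∧ i ≤ n - 1 ∧
      ({(a : ℕ), (b : ℕ), (c : ℕ)} : Multiset ℕ) = {i, n - i, n} then 4
  else if (a : ℕ) ≤ n ∧ (b : ℕ) ≤ n ∧ (c : ℕ) ≤ n ∧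
      (a : ℕ) + (b : ℕ) + (c : ℕ) = 2 * n ∧ (a : ℕ) ≠ n ∧ (b : ℕ) ≠ n ∧ (c : ℕ) ≠ n then 8
  else if ({(a : ℕ), (b : ℕ), (c : ℕ)} : Multiset ℕ) = {n, n, n} then 8
  else 0

/-- `F` is a potential of the Frobenius manifold mirror to the quadric `Qⁿ` on the open
neighborhood `U` of `0`: `F` is `ℂ`-analytic on `U`; `F` and its first and second partial
derivatives vanish at `0`; `∂₀∂ₐ∂_b F = g_{ab}` on `U` (flat identity `∂_{y₀}`); the WDVV
equations hold on `U`; the Euler-field combination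
`n ∂_{y₁}F + ∑_{i=0}^{n} (1−i) yᵢ ∂_{yᵢ}F + (1 − n/2) y_{n+1} ∂_{y_{n+1}}F − (3−n) F`
coincides on `U` with a polynomial of total degree `≤ 2`; and the third partial derivatives
at `0` are the prescribed length-3 correlators `corr3` (all others vanishing). -/
def IsQuadricFrobeniusPotential (n : ℕ) (U : Set (Fin (n + 2) → ℂ))
    (F : (Fin (n + 2) → ℂ) → ℂ) : Prop :=
  AnalyticOnNhd ℂ F U ∧
  F 0 = 0 ∧ (∀ i, pd n i F 0 = 0) ∧ (∀ i j, pd n i (pd n j F) 0 = 0) ∧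
  (∀ a b, ∀ y ∈ U, pd n (0 : Fin (n + 2)) (pd n a (pd n b F)) y = gmat n a b) ∧
  (∀ a b c d, ∀ y ∈ U,
    (∑ i : Fin (n + 2), ∑ j : Fin (n + 2),
        pd n a (pd n b (pd n i F)) y * ginv n i j * pd n j (pd n c (pd n d F)) y)
      = ∑ i : Fin (n + 2), ∑ j : Fin (n + 2),
          pd n a (pd n c (pd n i F)) y * ginv n i j * pd n j (pd n b (pd n d F)) y) ∧
  (∃ p : MvPolynomial (Fin (n + 2)) ℂ, p.totalDegree ≤ 2 ∧
    ∀ y ∈ U,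
      (n : ℂ) * pd n (1 : Fin (n + 2)) F y
          + (∑ i : Fin (n + 1),
              (1 - ((i : ℕ) : ℂ)) * y i.castSucc * pd n i.castSucc F y)
          + (1 - (n : ℂ) / 2) * y (Fin.last (n + 1)) * pd n (Fin.last (n + 1)) F y
          - (3 - (n : ℂ)) * F y
        = MvPolynomial.eval y p) ∧
  (∀ a b c, pd n a (pd n b (pd n c F)) 0 = corr3 n a b c)

lemma triple_eq_triple_iff (a b c x y z : ℕ) :
    ({a, b, c} : Multiset ℕ) = {x, y, z} ↔
      (a = x ∧ b = y ∧ c = z) ∨ (a = x ∧ b = z ∧ c = y) ∨ (a = y ∧ b = x ∧ c = z) ∨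
      (a = y ∧ b = z ∧ c = x) ∨ (a = z ∧ b = x ∧ c = y) ∨ (a = z ∧ b = y ∧ c = x) := by
  constructor
  · intro h
    have h' : [a, b, c].Perm [x, y, z] := Multiset.coe_eq_coe.1 h
    rw [← List.mem_permutations] at h'
    simp [List.permutations, List.permutationsAux, List.permutationsAux.rec] at h'
    grind
  · rintro (⟨rfl, rfl, rfl⟩ | ⟨rfl, rfl, rfl⟩ | ⟨rfl, rfl, rfl⟩ | ⟨rfl, rfl, rfl⟩ |
      ⟨rfl, rfl, rfl⟩ | ⟨rfl, rfl, rfl⟩) <;>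
    ext w <;>
    simp only [Multiset.insert_eq_cons, Multiset.count_cons, Multiset.count_singleton] <;>
    omega

/-- The involution `i ↦ n - i` on narrow indices, fixing the broad index. -/
def dualIndex (n : ℕ) (i : Fin (n + 2)) : Fin (n + 2) :=
  if (i : ℕ) ≤ n then ⟨n - i, by omega⟩ else i

lemma ginv_eq_ite (n : ℕ) (i j : Fin (n + 2)) :
    ginv n i j = if j = dualIndex n i then 1 / 2 else 0 := by
  unfold ginv dualIndex
  congr 1
  have := i.2
  have := j.2
  split_ifs <;> simp only [Fin.ext_iff, eq_iff_iff] <;> omega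

lemma sum_ginv (n : ℕ) (f g : Fin (n + 2) → ℂ) :
    ∑ i, ∑ j, f i * ginv n i j * g j = 1 / 2 * ∑ i, f i * g (dualIndex n i) := by
  rw [Finset.mul_sum]
  refine Finset.sum_congr rfl fun i _ => ?_
  simp only [ginv_eq_ite]
  rw [Finset.sum_eq_single (dualIndex n i)]
  · simp; ring
  · intro j _ hj
    simp [hj]
  · simp

lemma triple_narrow_pair_iff (n a b c : ℕ) :
    (∃ i : ℕ, 1 ≤ i ∧ i ≤ n - 1 ∧ ({a, b, c} : Multiset ℕ) = {i, n - i, n}) ↔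
      (1 ≤ a ∧ 1 ≤ b ∧ a + b = n ∧ c = n) ∨ (1 ≤ a ∧ 1 ≤ c ∧ a + c = n ∧ b = n) ∨
      (1 ≤ b ∧ 1 ≤ c ∧ b + c = n ∧ a = n) := by
  simp only [triple_eq_triple_iff]
  constructor
  · rintro ⟨i, h⟩
    omega
  · rintro (h | h | h)
    · exact ⟨a, by omega⟩
    · exact ⟨a, by omega⟩
    · exact ⟨b, by omega⟩

open Classical in
lemma corr3_eq_ite (n : ℕ) (a b c : Fin (n + 2)) (i j k : ℕ) (ha : (a : ℕ) = i)
    (hb : (b : ℕ) = j) (hc : (c : ℕ) = k) :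
    corr3 n a b c =
      if (i = n + 1 ∧ j = n + 1 ∧ k = 0) ∨ (i = n + 1 ∧ j = 0 ∧ k = n + 1) ∨
        (i = 0 ∧ j = n + 1 ∧ k = n + 1) then 2
      else if (i = n + 1 ∧ j = n + 1 ∧ k = n) ∨ (i = n + 1 ∧ j = n ∧ k = n + 1) ∨
        (i = n ∧ j = n + 1 ∧ k = n + 1) then -4
      else if i ≤ n ∧ j ≤ n ∧ k ≤ n ∧ i + j + k = n then 2
      else if (1 ≤ i ∧ 1 ≤ j ∧ i + j = n ∧ k = n) ∨ (1 ≤ i ∧ 1 ≤ k ∧ i + k = n ∧ j = n) ∨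
        (1 ≤ j ∧ 1 ≤ k ∧ j + k = n ∧ i = n) then 4
      else if i ≤ n ∧ j ≤ n ∧ k ≤ n ∧ i + j + k = 2 * n ∧ i ≠ n ∧ j ≠ n ∧ k ≠ n then 8
      else if i = n ∧ j = n ∧ k = n then 8
      else 0 := by
  subst ha hb hc
  unfold corr3
  refine if_congr ?_ rfl (if_congr ?_ rfl (if_congr Iff.rfl rfl
    (if_congr (triple_narrow_pair_iff n a b c) rfl (if_congr Iff.rfl rfl (if_congr ?_ rfl rfl)))))
  all_goals
    rw [triple_eq_triple_iff]
    omega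

lemma corr3_eq_zero_of_odd (n : ℕ) (a b c : Fin (n + 2))
    (h : Odd (Multiset.count (Fin.last (n + 1)) {a, b, c})) : corr3 n a b c = 0 := by
  have ha := a.2
  have hb := b.2
  have hc := c.2
  rw [Nat.odd_iff] at h
  simp only [Multiset.insert_eq_cons, Multiset.count_cons, Multiset.count_singleton,
    Fin.ext_iff, Fin.val_last] at h
  rw [corr3_eq_ite n a b c a b c rfl rfl rfl]
  split_ifs at h ⊢ <;> first | rfl | omega

lemma corr3_one_narrow (n : ℕ) (hn : 4 ≤ n) (b i : Fin (n + 2)) (hb : 1 ≤ (b : ℕ))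
    (hbn : (b : ℕ) < n) :
    corr3 n 1 b i = if (i : ℕ) + b + 1 = n then 2 else
      if (i : ℕ) = n ∧ (b : ℕ) + 1 = n then 4 else 0 := by
  have hi := i.2
  rw [corr3_eq_ite n 1 b i 1 b i (Fin.val_one n) rfl rfl]
  split_ifs <;> first | rfl | omega

lemma corr3_one_top (n : ℕ) (hn : 4 ≤ n) (b i : Fin (n + 2)) (hb : (b : ℕ) = n) :
    corr3 n 1 b i = if (i : ℕ) + 1 = n then 4 else 0 := by
  have hi := i.2
  rw [corr3_eq_ite n 1 b i 1 n i (Fin.val_one n) hb rfl]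
  split_ifs <;> first | rfl | omega

lemma corr3_one_broad (n : ℕ) (hn : 4 ≤ n) (i : Fin (n + 2)) :
    corr3 n 1 (Fin.last (n + 1)) i = 0 := by
  rw [corr3_eq_ite n _ _ i 1 (n + 1) i (Fin.val_one n) (Fin.val_last _) rfl]
  repeat rw [if_neg (by omega)]

lemma corr3_top_broad (n : ℕ) (hn : 4 ≤ n) (i b : Fin (n + 2)) (hb : (b : ℕ) = n) :
    corr3 n i b (Fin.last (n + 1)) = if i = Fin.last (n + 1) then -4 else 0 := by
  have hi := i.2
  simp only [Fin.ext_iff, Fin.val_last]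
  rw [corr3_eq_ite n i b _ i n (n + 1) rfl hb (Fin.val_last _)]
  split_ifs <;> first | rfl | omega

/-- The charge of a coordinate: the Euler field is `n ∂₁ + ∑ charge i • y i ∂ᵢ`. -/
noncomputable def charge (n : ℕ) (i : Fin (n + 2)) : ℂ :=
  if i = Fin.last (n + 1) then 1 - (n : ℂ) / 2 else 1 - ((i : ℕ) : ℂ)

/-- The identities between correlators, indexed by multisets of insertions, that follow from
the flat identity, the Euler condition and the differentiated WDVV equations. -/
structure IsQuadricCorrelator (n : ℕ) (c : Multiset (Fin (n + 2)) → ℂ) : Prop where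
  three : ∀ i j k, c (i ::ₘ j ::ₘ k ::ₘ 0) = corr3 n i j k
  unit : ∀ s, 3 ≤ s.card → c (0 ::ₘ s) = 0
  euler : ∀ s, 3 ≤ s.card →
    (n : ℂ) * c (1 ::ₘ s) = (3 - (n : ℂ) - (s.map (charge n)).sum) * c s
  wdvv : ∀ (a b d e : Fin (n + 2)) (s : Multiset (Fin (n + 2))),
    (s.antidiagonal.map fun p =>
      ∑ i, c (a ::ₘ b ::ₘ i ::ₘ p.1) * c (dualIndex n i ::ₘ d ::ₘ e ::ₘ p.2)).sum =
    (s.antidiagonal.map fun p =>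
      ∑ i, c (a ::ₘ d ::ₘ i ::ₘ p.1) * c (dualIndex n i ::ₘ b ::ₘ e ::ₘ p.2)).sum

lemma Multiset.sum_antidiagonal_eq_of_mixed_eq_zero {α M : Type*} [AddCommMonoid M]
    (f : Multiset α × Multiset α → M) (s : Multiset α) (hs : s ≠ 0)
    (h : ∀ p ∈ s.antidiagonal, p.1 ≠ 0 → p.2 ≠ 0 → f p = 0) :
    (s.antidiagonal.map f).sum = f (0, s) + f (s, 0) := by
  induction s using Multiset.induction_on generalizing f with
  | empty => exact absurd rfl hs
  | cons a s ih =>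
    rw [Multiset.antidiagonal_cons, Multiset.map_add, Multiset.sum_add, Multiset.map_map,
      Multiset.map_map]
    rcases eq_or_ne s 0 with rfl | hs0
    · simp
    · rw [ih _ hs0, ih _ hs0]
      · simp only [Function.comp, Prod.map, id]
        rw [h (s, a ::ₘ 0), h (a ::ₘ 0, s), add_zero, zero_add] <;>
          simp [hs0, Multiset.mem_antidiagonal, ← Multiset.singleton_add, add_comm]
      · rintro ⟨p, q⟩ hp h1 h2
        rw [Multiset.mem_antidiagonal] at hp
        refine h (a ::ₘ p, q) ?_ (by simp) h2
        rw [Multiset.mem_antidiagonal, ← hp, Multiset.cons_add]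
      · rintro ⟨p, q⟩ hp h1 h2
        rw [Multiset.mem_antidiagonal] at hp
        refine h (p, a ::ₘ q) ?_ h1 (by simp)
        rw [Multiset.mem_antidiagonal, ← hp, Multiset.add_cons]

lemma Multiset.sum_antidiagonal_replicate {α R : Type*} [Semiring R]
    (f : Multiset α × Multiset α → R) (a : α) (k : ℕ) :
    ((Multiset.replicate k a).antidiagonal.map f).sum =
      ∑ p ∈ Finset.HasAntidiagonal.antidiagonal k,
        (k.choose p.1 : R) * f (Multiset.replicate p.1 a, Multiset.replicate p.2 a) := by
  induction k generalizing f with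
  | zero => simp
  | succ k ih =>
    rw [Multiset.replicate_succ, Multiset.antidiagonal_cons, Multiset.map_add, Multiset.sum_add,
      Multiset.map_map, Multiset.map_map, ih, ih, Finset.sum_antidiagonal_choose_succ_mul
        (fun i j => f (Multiset.replicate i a, Multiset.replicate j a))]
    congr 1
    refine Finset.sum_congr rfl fun p hp => ?_
    rw [Finset.HasAntidiagonal.mem_antidiagonal] at hp
    rw [← Nat.choose_symm_of_eq_add hp.symm]
    simp

namespace IsQuadricCorrelator

variable {n : ℕ} {c : Multiset (Fin (n + 2)) → ℂ}

/-- The number of broad insertions. -/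
abbrev broadCount (s : Multiset (Fin (n + 2))) : ℕ := s.count (Fin.last (n + 1))

lemma dualIndex_eq_last_iff (i : Fin (n + 2)) :
    dualIndex n i = Fin.last (n + 1) ↔ i = Fin.last (n + 1) := by
  unfold dualIndex
  have := i.2
  split_ifs <;> simp only [Fin.ext_iff, Fin.val_last]
  omega

lemma mul_eq_zero_of_odd {s t : Multiset (Fin (n + 2))}
    (h : Odd (broadCount s + broadCount t)) (hs : Odd (broadCount s) → c s = 0)
    (ht : Odd (broadCount t) → c t = 0) : c s * c t = 0 := by
  rcases Nat.even_or_odd (broadCount s) with h' | h'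
  · rw [ht (by grind), mul_zero]
  · rw [hs h', zero_mul]

lemma odd_count_split (a b d e i : Fin (n + 2)) {p q s : Multiset (Fin (n + 2))}
    (hpq : p + q = s) (h : Odd (broadCount (a ::ₘ b ::ₘ d ::ₘ e ::ₘ s))) :
    Odd (broadCount (a ::ₘ b ::ₘ i ::ₘ p) +
      broadCount (dualIndex n i ::ₘ d ::ₘ e ::ₘ q)) := by
  subst hpq
  have := dualIndex_eq_last_iff i
  rw [Nat.odd_iff] at h ⊢
  simp only [broadCount, Multiset.count_cons, Multiset.count_add,
    eq_comm (a := Fin.last (n + 1)), this] at h ⊢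
  omega

lemma three_eq_zero_of_odd (hc : IsQuadricCorrelator n c) {s : Multiset (Fin (n + 2))}
    (hs : s.card = 3) (h : Odd (broadCount s)) : c s = 0 := by
  obtain ⟨i, j, k, rfl⟩ := Multiset.card_eq_three.1 hs
  exact (hc.three i j k).trans (corr3_eq_zero_of_odd n i j k h)

lemma one_cons_eq_zero (hn : 4 ≤ n) (hc : IsQuadricCorrelator n c)
    {s : Multiset (Fin (n + 2))} (hs : 3 ≤ s.card) (h : c s = 0) : c (1 ::ₘ s) = 0 := by
  have := hc.euler s hs
  rw [h, mul_zero] at this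
  exact (mul_eq_zero.1 this).resolve_left (by norm_cast; omega)

lemma one_ne_last (hn : 4 ≤ n) : (1 : Fin (n + 2)) ≠ Fin.last (n + 1) := by
  rw [Ne, Fin.ext_iff, Fin.val_one, Fin.val_last]
  omega

/-- A correlator with an odd number of broad insertions and at least one narrow insertion
vanishes as soon as all shorter correlators with an odd number of broad insertions do. -/
lemma eq_zero_of_narrow_mem (hn : 4 ≤ n) (hc : IsQuadricCorrelator n c) {m : ℕ} (hm : 4 ≤ m)
    (ih : ∀ t, 3 ≤ t.card → t.card < m → Odd (broadCount t) → c t = 0)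
    {s : Multiset (Fin (n + 2))} (hs : s.card = m) (hodd : Odd (broadCount s))
    {x : Fin (n + 2)} (hx : x ≠ Fin.last (n + 1)) (hxs : x ∈ s) : c s = 0 := by
  have hone : ∀ t, (1 ::ₘ t).card = m → Odd (broadCount (1 ::ₘ t)) → c (1 ::ₘ t) = 0 := by
    intro t ht hto
    rw [Multiset.card_cons] at ht
    refine one_cons_eq_zero hn hc (by omega) (ih t (by omega) (by omega) ?_)
    rwa [broadCount, Multiset.count_cons_of_ne (one_ne_last hn).symm] at hto
  obtain ⟨t, rfl⟩ := Multiset.exists_cons_of_mem hxs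
  rw [Multiset.card_cons] at hs
  rcases Nat.lt_or_ge (x : ℕ) 2 with hx2 | hx2
  · rcases Nat.lt_or_ge (x : ℕ) 1 with hx1 | hx1
    · obtain rfl : x = 0 := Fin.ext (by simpa using hx1)
      exact hc.unit t (by omega)
    · obtain rfl : x = 1 := Fin.ext (by rw [Fin.val_one]; omega)
      exact hone t (by simpa using hs) hodd
  have hxn : (x : ℕ) ≤ n := by
    have := x.2
    have : (x : ℕ) ≠ n + 1 := fun h => hx (Fin.ext h)
    omega
  have hto : Odd (broadCount t) := by rwa [broadCount, Multiset.count_cons_of_ne hx.symm] at hodd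
  obtain ⟨u, rfl⟩ := Multiset.exists_cons_of_mem (Multiset.count_pos.1 hto.pos)
  rw [Multiset.card_cons] at hs
  obtain ⟨d, hd⟩ : ∃ d, d ∈ u := Multiset.card_pos_iff_exists_mem.1 (by omega)
  obtain ⟨D, rfl⟩ := Multiset.exists_cons_of_mem hd
  rw [Multiset.card_cons] at hs
  set ε := Fin.last (n + 1) with hε
  have hD : D ≠ 0 := by
    rintro rfl
    simp at hs
    omega
  let k : Fin (n + 2) := ⟨x - 1, by omega⟩
  have hk : (k : ℕ) = x - 1 := rfl
  have hkε : k ≠ ε := by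
    rw [Ne, Fin.ext_iff, hε, Fin.val_last]
    omega
  have htot : Odd (broadCount (1 ::ₘ k ::ₘ ε ::ₘ d ::ₘ D)) := by
    rwa [broadCount, Multiset.count_cons_of_ne (one_ne_last hn).symm,
      Multiset.count_cons_of_ne hkε.symm]
  have htot' : Odd (broadCount (1 ::ₘ ε ::ₘ k ::ₘ d ::ₘ D)) := by
    rwa [Multiset.cons_swap ε k]
  have hmixed : ∀ a b e f : Fin (n + 2), Odd (broadCount (a ::ₘ b ::ₘ e ::ₘ f ::ₘ D)) →
      ∀ p ∈ D.antidiagonal, p.1 ≠ 0 → p.2 ≠ 0 →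
      ∑ i, c (a ::ₘ b ::ₘ i ::ₘ p.1) * c (dualIndex n i ::ₘ e ::ₘ f ::ₘ p.2) = 0 := by
    rintro a b e f h ⟨p, q⟩ hp h1 h2
    rw [Multiset.mem_antidiagonal] at hp
    have hcard := congrArg Multiset.card hp
    rw [Multiset.card_add] at hcard
    have := Multiset.card_pos.2 h1
    have := Multiset.card_pos.2 h2
    dsimp only at *
    refine Finset.sum_eq_zero fun i _ => mul_eq_zero_of_odd (odd_count_split a b e f i hp h)
      (ih _ ?_ ?_) (ih _ ?_ ?_) <;> simp only [Multiset.card_cons] <;> omega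
  have hlast : ∀ b e f : Fin (n + 2), Odd (broadCount (1 ::ₘ b ::ₘ e ::ₘ f ::ₘ D)) →
      ∑ i, c (1 ::ₘ b ::ₘ i ::ₘ D) * c (dualIndex n i ::ₘ e ::ₘ f ::ₘ 0) = 0 := by
    intro b e f h
    refine Finset.sum_eq_zero fun i _ => mul_eq_zero_of_odd
      (odd_count_split 1 b e f i (add_zero D) h) (hone _ ?_)
      (three_eq_zero_of_odd hc (by simp))
    simp only [Multiset.card_cons]
    omega
  have key := hc.wdvv 1 k ε d D
  rw [Multiset.sum_antidiagonal_eq_of_mixed_eq_zero _ _ hD (hmixed _ _ _ _ htot),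
    Multiset.sum_antidiagonal_eq_of_mixed_eq_zero _ _ hD (hmixed _ _ _ _ htot'),
    hlast _ _ _ htot, hlast _ _ _ htot'] at key
  simp only [hc.three, corr3_one_broad n hn, hε, zero_mul, Finset.sum_const_zero, add_zero] at key
  rw [Finset.sum_eq_single (⟨n - x, by omega⟩ : Fin (n + 2))] at key
  · rw [corr3_one_narrow n hn k _ (by omega) (by omega), if_pos (by simp only; omega)] at key
    have hdual : dualIndex n (⟨n - x, by omega⟩ : Fin (n + 2)) = x := by
      unfold dualIndex
      rw [if_pos (by simp only; omega)]
      exact Fin.ext (by simp only; omega)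
    rw [hdual] at key
    exact (mul_eq_zero.1 key).resolve_left two_ne_zero
  · intro i _ hi
    rw [corr3_one_narrow n hn k i (by omega) (by omega)]
    have hi' : (i : ℕ) ≠ n - x := fun h => hi (Fin.ext h)
    rw [if_neg (by omega)]
    split_ifs with h
    · have hdual : dualIndex n i = 0 := by
        unfold dualIndex
        rw [if_pos h.1.le]
        exact Fin.ext (by simp [h.1])
      rw [hdual, hc.unit, mul_zero]
      simp only [Multiset.card_cons]
      omega
    · rw [zero_mul]
  · simp

/-- The purely broad correlator of length `m ≥ 5` vanishes if all shorter correlators with an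
odd number of broad insertions do. -/
lemma replicate_broad_eq_zero (hn : 4 ≤ n) (hc : IsQuadricCorrelator n c) {m : ℕ} (hm : 5 ≤ m)
    (hodd : Odd m)
    (ih : ∀ t, 3 ≤ t.card → t.card < m → Odd (broadCount t) → c t = 0) :
    c (Multiset.replicate m (Fin.last (n + 1))) = 0 := by
  have hnar : ∀ t : Multiset (Fin (n + 2)), ∀ x, x ≠ Fin.last (n + 1) → x ∈ t → 3 ≤ t.card →
      t.card ≤ m → Odd (broadCount t) → c t = 0 := by
    intro t x hx hxt h3 hle ho
    rcases hle.lt_or_eq with h | h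
    · exact ih t h3 h ho
    · exact eq_zero_of_narrow_mem hn hc (by omega) ih h ho hx hxt
  obtain ⟨k, rfl⟩ : ∃ k, m = k + 3 := ⟨m - 3, by omega⟩
  set ε := Fin.last (n + 1) with hε
  let ν : Fin (n + 2) := ⟨n, by omega⟩
  have hν : (ν : ℕ) = n := rfl
  have hνε : ν ≠ ε := by
    rw [Ne, Fin.ext_iff, hε, Fin.val_last]
    omega
  have h1ε : (1 : Fin (n + 2)) ≠ ε := one_ne_last hn
  have hεε : dualIndex n ε = ε := (dualIndex_eq_last_iff ε).2 rfl
  have htot : Odd (broadCount (1 ::ₘ ν ::ₘ ε ::ₘ ε ::ₘ Multiset.replicate (k + 1) ε)) := by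
    rw [broadCount, Multiset.count_cons_of_ne h1ε.symm, Multiset.count_cons_of_ne hνε.symm,
      Multiset.count_cons_self, Multiset.count_cons_self, Multiset.count_replicate_self]
    exact hodd
  have htot' : Odd (broadCount (1 ::ₘ ε ::ₘ ν ::ₘ ε ::ₘ Multiset.replicate (k + 1) ε)) := by
    rwa [Multiset.cons_swap ε ν]
  have hrep : ∀ p q : ℕ, p + q = k + 1 →
      Multiset.replicate p ε + Multiset.replicate q ε = Multiset.replicate (k + 1) ε := by
    intro p q hpq
    rw [← Multiset.replicate_add, hpq]
  have key := hc.wdvv 1 ν ε ε (Multiset.replicate (k + 1) ε)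
  rw [Multiset.sum_antidiagonal_replicate, Multiset.sum_antidiagonal_replicate] at key
  have hL : ∀ p q : ℕ, p + q = k + 1 → 2 ≤ p →
      ∑ i, c (1 ::ₘ ν ::ₘ i ::ₘ Multiset.replicate p ε) *
        c (dualIndex n i ::ₘ ε ::ₘ ε ::ₘ Multiset.replicate q ε) = 0 := by
    intro p q hpq h2
    refine Finset.sum_eq_zero fun i _ => mul_eq_zero_of_odd
      (odd_count_split 1 ν ε ε i (hrep p q hpq) htot) (fun h => ?_) (fun h => ?_)
    · refine one_cons_eq_zero hn hc (by simp; omega) ?_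
      refine hnar _ ν hνε (by simp) (by simp; omega) (by simp; omega) ?_
      rwa [broadCount, Multiset.count_cons_of_ne h1ε.symm] at h
    · exact ih _ (by simp) (by simp; omega) h
  have hR : ∀ p q : ℕ, p + q = k + 1 → 1 ≤ p → 1 ≤ q →
      ∑ i, c (1 ::ₘ ε ::ₘ i ::ₘ Multiset.replicate p ε) *
        c (dualIndex n i ::ₘ ν ::ₘ ε ::ₘ Multiset.replicate q ε) = 0 := by
    intro p q hpq h1 h2
    refine Finset.sum_eq_zero fun i _ => mul_eq_zero_of_odd
      (odd_count_split 1 ε ν ε i (hrep p q hpq) htot') (fun h => ?_) (fun h => ?_)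
    · exact hnar _ 1 h1ε (by simp) (by simp) (by simp; omega) h
    · exact hnar _ ν hνε (by simp) (by simp) (by simp; omega) h
  rw [Finset.sum_eq_add_of_mem (0, k + 1) (1, k) (by simp) (by simp; omega) (by simp),
    Finset.sum_eq_single_of_mem (k + 1, 0) (by simp)] at key
  rotate_left
  · rintro ⟨p, q⟩ hpq hne
    rw [Finset.HasAntidiagonal.mem_antidiagonal] at hpq
    rcases Nat.eq_zero_or_pos p with rfl | hp
    · simp only [Multiset.replicate_zero, hc.three, corr3_one_broad n hn, hε, zero_mul,
        Finset.sum_const_zero, mul_zero]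
    · rw [hR p q hpq hp, mul_zero]
      by_contra hq
      exact hne (Prod.ext (by simp only at *; omega) (by simp only at *; omega))
  · rintro ⟨p, q⟩ hpq ⟨hne0, hne1⟩
    rw [Finset.HasAntidiagonal.mem_antidiagonal] at hpq
    rw [hL p q hpq, mul_zero]
    by_contra hq
    have : p = 0 ∨ p = 1 := by omega
    rcases this with rfl | rfl
    · exact hne0 (Prod.ext rfl (by simp only at *; omega))
    · exact hne1 (Prod.ext rfl (by simp only at *; omega))
  dsimp only at key
  have hcε : charge n ε = 1 - (n : ℂ) / 2 := if_pos rfl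
  have hcν : charge n ν = 1 - (n : ℂ) := if_neg hνε
  have hc4 : c (1 ::ₘ ν ::ₘ ε ::ₘ ε ::ₘ 0) = -4 := by
    have h := hc.euler (ν ::ₘ ε ::ₘ ε ::ₘ 0) (by simp)
    have h3 : c (ν ::ₘ ε ::ₘ ε ::ₘ 0) = -4 := by
      rw [Multiset.cons_swap, hc.three, corr3_top_broad n hn _ _ hν, if_pos rfl]
    rw [h3] at h
    simp only [Multiset.map_cons, Multiset.map_zero, Multiset.sum_cons, Multiset.sum_zero,
      hcν, hcε] at h
    have hn0 : (n : ℂ) ≠ 0 := by norm_cast; omega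
    apply mul_left_cancel₀ hn0
    rw [h]
    ring
  set X := c (1 ::ₘ Multiset.replicate (k + 3) ε) with hX
  set Y := c (Multiset.replicate (k + 3) ε) with hY
  have e0 : ∑ i, c (1 ::ₘ ν ::ₘ i ::ₘ Multiset.replicate 0 ε) *
      c (dualIndex n i ::ₘ ε ::ₘ ε ::ₘ Multiset.replicate (k + 1) ε) = 4 * X := by
    rw [Finset.sum_eq_single (⟨n - 1, by omega⟩ : Fin (n + 2))]
    · rw [Multiset.replicate_zero, hc.three, corr3_one_top n hn _ _ hν,
        if_pos (by simp only; omega), hX]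
      have hdual : dualIndex n (⟨n - 1, by omega⟩ : Fin (n + 2)) = 1 := by
        unfold dualIndex
        rw [if_pos (by simp only; omega)]
        exact Fin.ext (by simp only [Fin.val_one]; omega)
      rw [hdual]
      rfl
    · intro i _ hi
      have hi' : (i : ℕ) ≠ n - 1 := fun h => hi (Fin.ext h)
      rw [Multiset.replicate_zero, hc.three, corr3_one_top n hn _ _ hν, if_neg (by omega),
        zero_mul]
    · simp
  have e1 : ∑ i, c (1 ::ₘ ν ::ₘ i ::ₘ Multiset.replicate 1 ε) *
      c (dualIndex n i ::ₘ ε ::ₘ ε ::ₘ Multiset.replicate k ε) = -4 * Y := by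
    rw [Finset.sum_eq_single ε]
    · rw [hεε, Multiset.replicate_one, ← hc4, hY]
      rfl
    · intro i _ hi
      refine mul_eq_zero_of_odd (odd_count_split 1 ν ε ε i (hrep 1 k (by omega)) htot)
        (fun h => ih _ (by simp) (by simp; omega) h) (fun h => ?_)
      exact hnar _ (dualIndex n i) (fun h' => hi ((dualIndex_eq_last_iff i).1 h')) (by simp)
        (by simp) (by simp) h
    · simp
  have e2 : ∑ i, c (1 ::ₘ ε ::ₘ i ::ₘ Multiset.replicate (k + 1) ε) *
      c (dualIndex n i ::ₘ ν ::ₘ ε ::ₘ Multiset.replicate 0 ε) = -4 * X := by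
    rw [Finset.sum_eq_single ε]
    · rw [hεε, Multiset.replicate_zero, hc.three, corr3_top_broad n hn _ _ hν, if_pos rfl,
        mul_comm, hX]
      rfl
    · intro i _ hi
      rw [Multiset.replicate_zero, hc.three, corr3_top_broad n hn _ _ hν,
        if_neg (fun h' => hi ((dualIndex_eq_last_iff i).1 h')), mul_zero]
    · simp
  rw [e0, e1, e2] at key
  have hE := hc.euler (Multiset.replicate (k + 3) ε) (by simp)
  rw [Multiset.map_replicate, Multiset.sum_replicate, ← hX, ← hY, hcε] at hE
  simp only [Nat.choose_zero_right, Nat.choose_one_right, Nat.choose_self, nsmul_eq_mul] at key hE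
  push_cast at key hE
  have hfin : (k : ℂ) * Y = 0 := by
    linear_combination hE - (n / 8 : ℂ) * key
  exact (mul_eq_zero.1 hfin).resolve_left (by norm_cast; omega)

theorem eq_zero_of_odd (hn : 4 ≤ n) (hc : IsQuadricCorrelator n c)
    (s : Multiset (Fin (n + 2))) (hs : 3 ≤ s.card) (hodd : Odd (broadCount s)) : c s = 0 := by
  induction hm : s.card using Nat.strong_induction_on generalizing s with
  | _ m ih =>
    have ih' : ∀ t : Multiset (Fin (n + 2)), 3 ≤ t.card → t.card < m → Odd (broadCount t) →
        c t = 0 := fun t h3 hlt ho => ih t.card hlt t h3 ho rfl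
    rcases Nat.lt_or_ge m 4 with hm4 | hm4
    · exact three_eq_zero_of_odd hc (by omega) hodd
    by_cases hx : ∃ x ∈ s, x ≠ Fin.last (n + 1)
    · obtain ⟨x, hxs, hx⟩ := hx
      exact eq_zero_of_narrow_mem hn hc hm4 ih' hm hodd hx hxs
    · push Not at hx
      obtain rfl := Multiset.eq_replicate.2 ⟨hm, hx⟩
      rw [broadCount, Multiset.count_replicate_self] at hodd
      refine replicate_broad_eq_zero hn hc ?_ hodd ih'
      rcases hodd with ⟨j, rfl⟩
      omega

end IsQuadricCorrelator

section PartialDerivatives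

variable {n : ℕ} {U : Set (Fin (n + 2) → ℂ)} {f g : (Fin (n + 2) → ℂ) → ℂ}

lemma hasDerivAt_pd {y : Fin (n + 2) → ℂ} (hf : DifferentiableAt ℂ f y) (i : Fin (n + 2)) :
    HasDerivAt (fun t => f (Function.update y i t)) (pd n i f y) (y i) := by
  have h : DifferentiableAt ℂ (fun t => f (Function.update y i t)) (y i) := by
    refine DifferentiableAt.comp (y i) ?_ (hasDerivAt_update y i (y i)).differentiableAt
    rwa [Function.update_eq_self]
  exact h.hasDerivAt

lemma pd_eq_fderiv {y : Fin (n + 2) → ℂ} (hf : DifferentiableAt ℂ f y) (i : Fin (n + 2)) :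
    pd n i f y = fderiv ℂ f y (Pi.single i 1) := by
  refine (hasDerivAt_pd hf i).unique ?_
  have h := hf.hasFDerivAt
  rw [← Function.update_eq_self i y] at h
  have h' := h.comp_hasDerivAt (y i) (hasDerivAt_update y i (y i))
  rwa [Function.update_eq_self] at h'

lemma pd_eqOn (hU : IsOpen U) (h : Set.EqOn f g U) (i : Fin (n + 2)) :
    Set.EqOn (pd n i f) (pd n i g) U := by
  intro y hy
  refine Filter.EventuallyEq.deriv_eq ?_
  have hc : Continuous fun t : ℂ => Function.update y i t := continuous_const.update i continuous_id
  have hmem : Function.update y i (y i) ∈ U := by rwa [Function.update_eq_self]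
  filter_upwards [hc.continuousAt.eventually (hU.mem_nhds hmem)] with t ht using h ht

lemma analyticOnNhd_pd (hU : IsOpen U) (hf : AnalyticOnNhd ℂ f U) (i : Fin (n + 2)) :
    AnalyticOnNhd ℂ (pd n i f) U := by
  have h := (ContinuousLinearMap.apply ℂ ℂ (Pi.single i 1 : Fin (n + 2) → ℂ)).comp_analyticOnNhd
    hf.fderiv
  exact h.congr hU fun y hy => (pd_eq_fderiv (hf y hy).differentiableAt i).symm

lemma pd_comm (hU : IsOpen U) (hf : AnalyticOnNhd ℂ f U) (i j : Fin (n + 2)) :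
    Set.EqOn (pd n i (pd n j f)) (pd n j (pd n i f)) U := by
  have hsnd : ∀ a b : Fin (n + 2), ∀ y ∈ U,
      pd n a (pd n b f) y = fderiv ℂ (fderiv ℂ f) y (Pi.single a 1) (Pi.single b 1) := by
    intro a b y hy
    have hE : Set.EqOn (pd n b f) (fun z => fderiv ℂ f z (Pi.single b 1)) U :=
      fun z hz => pd_eq_fderiv (hf z hz).differentiableAt b
    have hd := (hf.fderiv y hy).differentiableAt
    rw [pd_eqOn hU hE a hy, pd_eq_fderiv (hd.clm_apply (differentiableAt_const _)),
      fderiv_clm_apply hd (differentiableAt_const _)]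
    simp
  intro y hy
  rw [hsnd i j y hy, hsnd j i y hy]
  exact (hf y hy).contDiffAt.isSymmSndFDerivAt_of_omega _ _

/-- The iterated partial derivative along a list of directions. -/
noncomputable abbrev iterPd (n : ℕ) (l : List (Fin (n + 2))) (f : (Fin (n + 2) → ℂ) → ℂ) :
    (Fin (n + 2) → ℂ) → ℂ :=
  l.foldr (pd n) f

/-- The iterated partial derivative along a multiset of directions. -/
noncomputable def multiPd (n : ℕ) (s : Multiset (Fin (n + 2))) (f : (Fin (n + 2) → ℂ) → ℂ) :
    (Fin (n + 2) → ℂ) → ℂ :=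
  iterPd n s.toList f

lemma iterPd_append (l₁ l₂ : List (Fin (n + 2))) :
    iterPd n (l₁ ++ l₂) f = iterPd n l₁ (iterPd n l₂ f) :=
  List.foldr_append

lemma iterPd_eqOn (hU : IsOpen U) (h : Set.EqOn f g U) (l : List (Fin (n + 2))) :
    Set.EqOn (iterPd n l f) (iterPd n l g) U := by
  induction l with
  | nil => exact h
  | cons i l ih => exact pd_eqOn hU ih i

lemma analyticOnNhd_iterPd (hU : IsOpen U) (hf : AnalyticOnNhd ℂ f U)
    (l : List (Fin (n + 2))) : AnalyticOnNhd ℂ (iterPd n l f) U := by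
  induction l with
  | nil => exact hf
  | cons i l ih => exact analyticOnNhd_pd hU ih i

lemma iterPd_perm (hU : IsOpen U) (hf : AnalyticOnNhd ℂ f U) {l₁ l₂ : List (Fin (n + 2))}
    (h : l₁.Perm l₂) : Set.EqOn (iterPd n l₁ f) (iterPd n l₂ f) U := by
  induction h with
  | nil => exact fun _ _ => rfl
  | cons i _ ih => exact pd_eqOn hU ih i
  | swap i j l => exact pd_comm hU (analyticOnNhd_iterPd hU hf l) j i
  | trans _ _ ih₁ ih₂ => exact ih₁.trans ih₂

lemma multiPd_eqOn_iterPd (hU : IsOpen U) (hf : AnalyticOnNhd ℂ f U)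
    {s : Multiset (Fin (n + 2))} {l : List (Fin (n + 2))} (h : s = l) :
    Set.EqOn (multiPd n s f) (iterPd n l f) U :=
  iterPd_perm hU hf (Multiset.coe_eq_coe.1 (by rw [Multiset.coe_toList, h]))

lemma multiPd_pd (hU : IsOpen U) (hf : AnalyticOnNhd ℂ f U) (s : Multiset (Fin (n + 2)))
    (i : Fin (n + 2)) : Set.EqOn (multiPd n s (pd n i f)) (multiPd n (i ::ₘ s) f) U := by
  intro y hy
  rw [multiPd_eqOn_iterPd hU hf (l := s.toList ++ [i]) _ hy, iterPd_append]
  · rfl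
  · rw [← Multiset.coe_add, Multiset.coe_toList, Multiset.coe_singleton, Multiset.add_comm,
      Multiset.singleton_add]

lemma pd_add (hf : AnalyticOnNhd ℂ f U) (hg : AnalyticOnNhd ℂ g U) (i : Fin (n + 2)) :
    Set.EqOn (pd n i (fun y => f y + g y)) (fun y => pd n i f y + pd n i g y) U :=
  fun y hy => ((hasDerivAt_pd (hf y hy).differentiableAt i).add
    (hasDerivAt_pd (hg y hy).differentiableAt i)).deriv

lemma pd_mul (hf : AnalyticOnNhd ℂ f U) (hg : AnalyticOnNhd ℂ g U) (i : Fin (n + 2)) :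
    Set.EqOn (pd n i (fun y => f y * g y)) (fun y => pd n i f y * g y + f y * pd n i g y) U := by
  intro y hy
  have h := ((hasDerivAt_pd (hf y hy).differentiableAt i).fun_mul
    (hasDerivAt_pd (hg y hy).differentiableAt i)).deriv
  rwa [Function.update_eq_self] at h

lemma iterPd_add (hU : IsOpen U) (hf : AnalyticOnNhd ℂ f U) (hg : AnalyticOnNhd ℂ g U)
    (l : List (Fin (n + 2))) :
    Set.EqOn (iterPd n l (fun y => f y + g y)) (fun y => iterPd n l f y + iterPd n l g y) U := by
  induction l with
  | nil => exact fun _ _ => rfl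
  | cons i l ih =>
    exact (pd_eqOn hU ih i).trans
      (pd_add (analyticOnNhd_iterPd hU hf l) (analyticOnNhd_iterPd hU hg l) i)

lemma pd_const (a : ℂ) (i : Fin (n + 2)) : pd n i (fun _ => a) = fun _ => 0 := by
  funext y
  exact deriv_const _ _

lemma iterPd_const (a : ℂ) {l : List (Fin (n + 2))} (hl : l ≠ []) :
    iterPd n l (fun _ => a) = fun _ => 0 := by
  induction l with
  | nil => exact absurd rfl hl
  | cons i l ih =>
    change pd n i (iterPd n l fun _ => a) = _
    rcases eq_or_ne l [] with rfl | h
    · exact pd_const a i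
    · rw [ih h, pd_const]

lemma iterPd_sum (hU : IsOpen U) {ι : Type*} (t : Finset ι) (F : ι → (Fin (n + 2) → ℂ) → ℂ)
    (hF : ∀ k, AnalyticOnNhd ℂ (F k) U) (l : List (Fin (n + 2))) :
    Set.EqOn (iterPd n l (fun y => ∑ k ∈ t, F k y)) (fun y => ∑ k ∈ t, iterPd n l (F k) y) U := by
  classical
  induction t using Finset.induction_on with
  | empty =>
    intro y _
    simp only [Finset.sum_empty]
    rcases eq_or_ne l [] with rfl | h
    · rfl
    · rw [iterPd_const 0 h]
  | insert k t hk ih =>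
    intro y hy
    simp only [Finset.sum_insert hk]
    rw [iterPd_add hU (hF k) (Finset.analyticOnNhd_fun_sum t fun k _ => hF k) l hy]
    exact congrArg _ (ih hy)

/-- The higher Leibniz rule. -/
lemma iterPd_mul (hU : IsOpen U) (hf : AnalyticOnNhd ℂ f U) (hg : AnalyticOnNhd ℂ g U)
    (l : List (Fin (n + 2))) {y : Fin (n + 2) → ℂ} (hy : y ∈ U) :
    iterPd n l (fun y => f y * g y) y =
      ((l : Multiset (Fin (n + 2))).antidiagonal.map fun p =>
        multiPd n p.1 f y * multiPd n p.2 g y).sum := by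
  induction l using List.reverseRecOn generalizing f g with
  | nil => simp [multiPd]
  | append_singleton l i ih =>
    have hfi := analyticOnNhd_pd hU hf i
    have hgi := analyticOnNhd_pd hU hg i
    have hcoe : ((l ++ [i] : List (Fin (n + 2))) : Multiset (Fin (n + 2))) = i ::ₘ l := by
      rw [← Multiset.coe_add, Multiset.coe_singleton, Multiset.add_comm, Multiset.singleton_add]
    rw [iterPd_append, hcoe, Multiset.antidiagonal_cons, Multiset.map_add, Multiset.sum_add,
      Multiset.map_map, Multiset.map_map]
    rw [show iterPd n [i] (fun y => f y * g y) = pd n i (fun y => f y * g y) from rfl,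
      iterPd_eqOn hU (pd_mul hf hg i) l hy, iterPd_add hU (hfi.mul hg) (hf.mul hgi) l hy]
    dsimp only
    rw [ih hfi hg, ih hf hgi, add_comm]
    congr 2 <;> refine Multiset.map_congr rfl fun p _ => ?_
    · simp only [Function.comp, Prod.map, id, multiPd_pd hU hg p.2 i hy]
    · simp only [Function.comp, Prod.map, id, multiPd_pd hU hf p.1 i hy]

lemma pd_eval (p : MvPolynomial (Fin (n + 2)) ℂ) (i : Fin (n + 2)) :
    pd n i (fun y => MvPolynomial.eval y p) =
      fun y => MvPolynomial.eval y (MvPolynomial.pderiv i p) := by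
  funext y
  refine HasDerivAt.deriv ?_
  induction p using MvPolynomial.induction_on with
  | C a => simpa using hasDerivAt_const (y i) a
  | add p q hp hq => simpa using hp.fun_add hq
  | mul_X p j hp =>
    have h := hp.fun_mul (hasDerivAt_pi.1 (hasDerivAt_update y i (y i)) j)
    have hsingle : MvPolynomial.eval y
        ((Pi.single i 1 : Fin (n + 2) → MvPolynomial (Fin (n + 2)) ℂ) j) =
        (Pi.single i 1 : Fin (n + 2) → ℂ) j := by
      rcases eq_or_ne j i with rfl | hij
      · simp
      · simp [Pi.single_eq_of_ne hij]
    simp only [Function.update_eq_self] at h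
    simp only [map_mul, MvPolynomial.eval_X, MvPolynomial.pderiv_mul, map_add,
      MvPolynomial.pderiv_X]
    rw [hsingle]
    exact h

lemma iterPd_eval_eq_zero (p : MvPolynomial (Fin (n + 2)) ℂ) (l : List (Fin (n + 2)))
    (hl : p.totalDegree < l.length) : iterPd n l (fun y => MvPolynomial.eval y p) = fun _ => 0 := by
  obtain ⟨q, hq, hcoeff⟩ : ∃ q : MvPolynomial (Fin (n + 2)) ℂ,
      iterPd n l (fun y => MvPolynomial.eval y p) = (fun y => MvPolynomial.eval y q) ∧
      ∀ m : Fin (n + 2) →₀ ℕ, p.totalDegree < m.degree + l.length → q.coeff m = 0 := by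
    clear hl
    induction l with
    | nil => exact ⟨p, rfl, fun m hm => MvPolynomial.coeff_eq_zero_of_totalDegree_lt hm⟩
    | cons i l ih =>
      obtain ⟨q, hq, hcoeff⟩ := ih
      refine ⟨MvPolynomial.pderiv i q, ?_, fun m hm => ?_⟩
      · change pd n i (iterPd n l _) = _
        rw [hq, pd_eval]
      · rw [MvPolynomial.coeff_pderiv, hcoeff, zero_mul]
        rw [List.length_cons] at hm
        rw [map_add, Finsupp.degree_single]
        omega
  have hq0 : q = 0 := MvPolynomial.ext _ _ fun m => by
    rw [hcoeff m (by omega), MvPolynomial.coeff_zero]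
  rw [hq, hq0]
  simp

/-- The Euler field acting on functions. -/
noncomputable def eulerOp (n : ℕ) (f : (Fin (n + 2) → ℂ) → ℂ) (y : Fin (n + 2) → ℂ) : ℂ :=
  n * pd n 1 f y + ∑ i, charge n i * y i * pd n i f y

lemma pd_eulerOp (hU : IsOpen U) (hf : AnalyticOnNhd ℂ f U) (κ : ℂ) (j : Fin (n + 2)) :
    Set.EqOn (pd n j (fun y => eulerOp n f y + κ * f y))
      (fun y => eulerOp n (pd n j f) y + (charge n j + κ) * pd n j f y) U := by
  intro y hy
  have hd : ∀ i, HasDerivAt (fun t => pd n i f (Function.update y j t))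
      (pd n j (pd n i f) y) (y j) :=
    fun i => hasDerivAt_pd (analyticOnNhd_pd hU hf i y hy).differentiableAt j
  have hsum := HasDerivAt.fun_sum (u := Finset.univ) fun i _ =>
    ((hasDerivAt_pi.1 (hasDerivAt_update y j (y j)) i).const_mul (charge n i)).fun_mul (hd i)
  have h := ((((hd 1).const_mul (n : ℂ)).fun_add hsum).fun_add
    ((hasDerivAt_pd (hf y hy).differentiableAt j).const_mul κ)).deriv
  refine Eq.trans h ?_
  simp only [Function.update_eq_self, Finset.sum_add_distrib, eulerOp, pd_comm hU hf j _ hy]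
  rw [Finset.sum_eq_single j]
  · rw [Pi.single_eq_same]
    ring
  · intro i _ hij
    rw [Pi.single_eq_of_ne hij]
    ring
  · simp

lemma iterPd_eulerOp (hU : IsOpen U) (hf : AnalyticOnNhd ℂ f U) (κ : ℂ)
    (l : List (Fin (n + 2))) :
    Set.EqOn (iterPd n l (fun y => eulerOp n f y + κ * f y))
      (fun y => eulerOp n (iterPd n l f) y + ((l.map (charge n)).sum + κ) * iterPd n l f y) U := by
  induction l with
  | nil =>
    intro y _
    simp
  | cons j l ih =>
    rw [List.map_cons, List.sum_cons, add_assoc]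
    exact (pd_eqOn hU ih j).trans (pd_eulerOp hU (analyticOnNhd_iterPd hU hf l) _ j)

end PartialDerivatives

/-- The correlators of a quadric Frobenius potential satisfy the expected identities. -/
theorem IsQuadricFrobeniusPotential.isQuadricCorrelator {n : ℕ} {U : Set (Fin (n + 2) → ℂ)}
    (hU : IsOpen U) (h0 : (0 : Fin (n + 2) → ℂ) ∈ U) {F : (Fin (n + 2) → ℂ) → ℂ}
    (hF : IsQuadricFrobeniusPotential n U F) :
    IsQuadricCorrelator n (fun s => multiPd n s F 0) := by
  obtain ⟨hA, -, -, -, hunit, hwdvv, ⟨p, hp, hEuler⟩, h3⟩ := hF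
  have hA3 : ∀ a b i, AnalyticOnNhd ℂ (pd n a (pd n b (pd n i F))) U := fun a b i =>
    analyticOnNhd_pd hU (analyticOnNhd_pd hU (analyticOnNhd_pd hU hA i) b) a
  have hcons3 : ∀ a b i s, multiPd n s (pd n a (pd n b (pd n i F))) 0 =
      multiPd n (a ::ₘ b ::ₘ i ::ₘ s) F 0 := by
    intro a b i s
    rw [multiPd_eqOn_iterPd hU hA (l := s.toList ++ [a, b, i]) _ h0, iterPd_append]
    · rfl
    · rw [← Multiset.coe_add, Multiset.coe_toList, Multiset.add_comm]
      simp only [← Multiset.cons_coe, Multiset.cons_add, Multiset.coe_nil, Multiset.zero_add]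
  refine ⟨fun i j k => ?_, fun s hs => ?_, fun s hs => ?_, fun a b d e s => ?_⟩
  · rw [← hcons3, ← h3]
    simp [multiPd]
  · obtain ⟨a, ha⟩ := Multiset.card_pos_iff_exists_mem.1 (by omega : 0 < s.card)
    obtain ⟨s, rfl⟩ := Multiset.exists_cons_of_mem ha
    rw [Multiset.card_cons] at hs
    obtain ⟨b, hb⟩ := Multiset.card_pos_iff_exists_mem.1 (by omega : 0 < s.card)
    obtain ⟨s, rfl⟩ := Multiset.exists_cons_of_mem hb
    rw [Multiset.card_cons] at hs
    have hs0 : s.toList ≠ [] := by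
      rw [← List.length_pos_iff, Multiset.length_toList]
      omega
    rw [← hcons3, multiPd, iterPd_eqOn hU (g := fun _ => gmat n a b) (hunit a b) _ h0,
      iterPd_const _ hs0]
  · have hop : Set.EqOn (fun y => eulerOp n F y + -(3 - (n : ℂ)) * F y)
        (fun y => MvPolynomial.eval y p) U := by
      intro y hy
      dsimp only
      rw [← hEuler y hy, eulerOp, Fin.sum_univ_castSucc]
      simp only [charge, Fin.castSucc_ne_last, if_false, if_true, Fin.val_castSucc]
      ring
    have h := (iterPd_eulerOp hU hA (-(3 - (n : ℂ))) s.toList h0).symm.trans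
      (iterPd_eqOn hU hop s.toList h0)
    rw [iterPd_eval_eq_zero p _ (by rw [Multiset.length_toList]; omega)] at h
    have hsum : (s.map (charge n)).sum = (s.toList.map (charge n)).sum := by
      conv_lhs => rw [← Multiset.coe_toList s]
      rw [Multiset.map_coe, Multiset.sum_coe]
    simp only [eulerOp, Pi.zero_apply, mul_zero, zero_mul, Finset.sum_const_zero, add_zero] at h
    rw [hsum, multiPd_eqOn_iterPd hU hA (l := 1 :: s.toList) _ h0]
    · change (n : ℂ) * pd n 1 (iterPd n s.toList F) 0 = _ * iterPd n s.toList F 0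
      linear_combination h
    · rw [← Multiset.cons_coe, Multiset.coe_toList]
  · have hside : ∀ b d : Fin (n + 2), (s.antidiagonal.map fun p =>
        ∑ i, multiPd n (a ::ₘ b ::ₘ i ::ₘ p.1) F 0 *
          multiPd n (dualIndex n i ::ₘ d ::ₘ e ::ₘ p.2) F 0).sum =
        iterPd n s.toList (fun y => ∑ i, pd n a (pd n b (pd n i F)) y *
          pd n (dualIndex n i) (pd n d (pd n e F)) y) 0 := by
      intro b d
      rw [iterPd_sum hU _ _ (fun i => (hA3 _ _ _).mul (hA3 _ _ _)) _ h0]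
      simp only [iterPd_mul hU (hA3 _ _ _) (hA3 _ _ _) _ h0, Multiset.coe_toList, hcons3]
      exact Multiset.sum_map_sum_map _ Finset.univ.val
    rw [hside, hside]
    refine iterPd_eqOn hU (fun y hy => ?_) _ h0
    have h := hwdvv a b d e y hy
    rw [sum_ginv, sum_ginv] at h
    exact mul_left_cancel₀ (by norm_num) h

/-- **Vanishing of correlators with an odd number of broad insertions**
(Lemma 6.9). Let `n ≥ 4` be even and let `F` be a potential of the Frobenius manifold
mirror to `Qⁿ` on an open neighborhood `U` of `0`. Then every iterated partial derivative
of `F` at `0` of order `m ≥ 3` in which the index `n+1` (the broad direction) occurs an odd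
number of times vanishes. -/
theorem odd_broad_correlators_vanish (n : ℕ) (hn : 4 ≤ n) (hev : Even n)
    (U : Set (Fin (n + 2) → ℂ)) (hU : IsOpen U) (h0 : (0 : Fin (n + 2) → ℂ) ∈ U)
    (F : (Fin (n + 2) → ℂ) → ℂ) (hF : IsQuadricFrobeniusPotential n U F)
    (l : List (Fin (n + 2))) (hl : 3 ≤ l.length)
    (hodd : Odd (l.count (Fin.last (n + 1)))) :
    (l.foldr (fun i G => pd n i G) F) 0 = 0 := by
  have hA := hF.1
  change iterPd n l F 0 = 0
  rw [← multiPd_eqOn_iterPd hU hA (s := l) rfl h0]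
  refine IsQuadricCorrelator.eq_zero_of_odd hn (hF.isQuadricCorrelator hU h0) l ?_ ?_
  · rwa [Multiset.coe_card]
  · rwa [IsQuadricCorrelator.broadCount, Multiset.coe_count]
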